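/- Let n ≥ 1 and let w be a permutation of [n]. The Schubert polynomial S_w(x) equals Max_w(x) if and only if w avoids the permutation patterns 1432 and 1423. -/

import Mathlib

open MvPolynomial

/-- Gale order: `C ≤ D` iff same cardinality and for each `k`, the `k`-th least element of `C`
is at most the `k`-th least element of `D`. -/
def GaleLE {n : ℕ} (C D : Finset (Fin n)) : Prop :=
  C.card = D.card ∧ ∀ (k : ℕ) (hC : k < C.card) (hD : k < D.card),
    (C.orderIsoOfFin rfl ⟨k, hC⟩ : Fin n) ≤ (D.orderIsoOfFin rfl ⟨k, hD⟩ : Fin n)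

/-- `C ≤ D` for diagrams: columnwise Gale order. -/
def DiagramLE {n : ℕ} (C D : Fin n → Finset (Fin n)) : Prop := ∀ j, GaleLE (C j) (D j)

/-- The Rothe diagram of a permutation `w` (0-indexed): column `j` consists of the rows `i`
with `w i > j` and `i < w⁻¹ j`. -/
def rothe {n : ℕ} (w : Equiv.Perm (Fin n)) (j : Fin n) : Finset (Fin n) :=
  Finset.univ.filter fun i => j < w i ∧ i < w.symm j

/-- The monomial `x^C = ∏_j ∏_{i ∈ C_j} x_i` of a diagram `C`. -/
noncomputable def xDiagram {n : ℕ} (C : Fin n → Finset (Fin n)) : MvPolynomial (Fin n) ℤ :=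
  ∏ j, ∏ i ∈ C j, X i

/- `Max_D(x) = ∑_{C ≤ D} x^C`, summed over all diagrams `C` with `C ≤ D`. -/
open scoped Classical in
noncomputable def MaxPoly {n : ℕ} (D : Fin n → Finset (Fin n)) : MvPolynomial (Fin n) ℤ :=
  ∑ C ∈ Finset.univ.filter (fun C : Fin n → Finset (Fin n) => DiagramLE C D), xDiagram C

/-- `S` is the family of Schubert polynomials: `S_{w₀} = x_1^{n-1} ⋯ x_{n-1}` for the longest
permutation `w₀` (i.e. `Fin.revPerm`), and whenever `w_i < w_{i+1}`,
`S_w = ∂_i S_{w s_i}`, expressed denominator-free as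
`(x_i - x_{i+1}) S_w = S_{w s_i} - s_i · S_{w s_i}`. -/
def IsSchubertFamily {n : ℕ} (S : Equiv.Perm (Fin n) → MvPolynomial (Fin n) ℤ) : Prop :=
  S Fin.revPerm = (∏ i : Fin n, X i ^ (n - 1 - (i : ℕ))) ∧
  ∀ (w : Equiv.Perm (Fin n)) (i j : Fin n), (i : ℕ) + 1 = (j : ℕ) → w i < w j →
    (X i - X j) * S w =
      S (w * Equiv.swap i j) - rename (Equiv.swap i j) (S (w * Equiv.swap i j))

/-- `w` contains the pattern `π`: there is a strictly increasing choice of positions on which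
`w` is order isomorphic to `π`. -/
def ContainsPattern {n m : ℕ} (w : Equiv.Perm (Fin n)) (π : Fin m → ℕ) : Prop :=
  ∃ f : Fin m ↪o Fin n, ∀ s t : Fin m, π s < π t ↔ w (f s) < w (f t)

/-- `w` avoids the pattern `π`. -/
def AvoidsPattern {n m : ℕ} (w : Equiv.Perm (Fin n)) (π : Fin m → ℕ) : Prop :=
  ¬ ContainsPattern w π

/-!
`MaxPoly` factors over columns: the factor of a column `E` is `galeSum X E`, the sum of the
monomials of the columns `C ≤ E`.

If `w` avoids both patterns, then `S w` satisfies this factorisation by descending induction along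
ascents `w i < w (i + 1)` at a left-to-right minimum `w i`. Passing from `w * sᵢ` to `w` replaces
`x₀ ⋯ xᵢ` by `x₀ ⋯ xᵢ₋₁` in column `w i` and moves cells from row `i` to row `i + 1` in some other
columns. On a single such column this is the Demazure operator `f ↦ ∂ᵢ (xᵢ f)`, and avoidance says
exactly that at most one column moves, so that the operator passes through the product.

Conversely, let `w` be `v` with a new least value inserted at position `m`, and suppose that `S w`
factors. Setting `x_m = 0` shows that the Schubert polynomial of `v` factors, so `v` avoids both
patterns by induction. Let `q` be the position of the least value of `v`. Putting `x_m = ε` with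
`ε² = 0` and all other variables equal to `1` relates the Schubert polynomials of the insertions
at all positions `m ≤ q`. The insertion at `q` avoids both patterns, hence factors, and comparing
the `ε`-coefficients at `m` and at `q` forces every column with a cell in rows `m, …, q - 1` to
be the column of the least value, which excludes both patterns with the inserted value as `1`.
-/

section GaleOrder

open Finset

variable {n : ℕ}

/-- The number of elements of `C` among the first `t` rows. -/
def countBelow (C : Finset (Fin n)) (t : ℕ) : ℕ := #{x ∈ C | x.val < t}

theorem countBelow_le_card (C : Finset (Fin n)) (t : ℕ) : countBelow C t ≤ #C :=
  card_filter_le _ _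

theorem countBelow_succ (C : Finset (Fin n)) (i : Fin n) :
    countBelow C (i + 1) = countBelow C i + if i ∈ C then 1 else 0 := by
  have hdisj : Disjoint {x ∈ C | x.val < i.val} {x ∈ C | x = i} :=
    disjoint_filter.mpr fun x _ hlt heq => hlt.ne (congrArg Fin.val heq)
  have hsplit : ({x ∈ C | x.val < i.val + 1} : Finset (Fin n)) =
      {x ∈ C | x.val < i.val} ∪ {x ∈ C | x = i} := by
    simp only [← filter_or, Nat.lt_succ_iff_lt_or_eq, Fin.ext_iff]
  rw [countBelow, hsplit, card_union_of_disjoint hdisj, filter_eq', ← countBelow]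
  split_ifs <;> simp

theorem orderIsoOfFin_lt_iff_lt_countBelow (C : Finset (Fin n)) (k : Fin #C) (t : ℕ) :
    ((C.orderIsoOfFin rfl k : Fin n) : ℕ) < t ↔ (k : ℕ) < countBelow C t := by
  let e : Fin #C ↪o Fin n := C.orderEmbOfFin rfl
  have hcount : countBelow C t = #{k | (e k : ℕ) < t} := by
    conv_lhs => rw [countBelow, ← map_orderEmbOfFin_univ C rfl, filter_map, card_map]
    rfl
  rw [hcount]
  constructor
  · intro hk
    rw [← Nat.add_one_le_iff, ← Fin.card_Iic]
    refine card_le_card fun l hl => ?_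
    simpa using (Fin.le_def.mp (e.monotone (mem_Iic.mp hl))).trans_lt hk
  · contrapose!
    intro hk
    rw [← Fin.card_Iio]
    refine card_le_card fun l hl => ?_
    rw [mem_filter_univ] at hl
    exact mem_Iio.mpr (e.lt_iff_lt.mp (hl.trans_le hk))

theorem galeLE_iff_countBelow_le {C D : Finset (Fin n)} :
    GaleLE C D ↔ #C = #D ∧ ∀ t, countBelow D t ≤ countBelow C t := by
  refine and_congr_right fun hcard => ⟨fun h t => ?_, fun h k hC hD => ?_⟩
  · by_contra! hlt
    have hD := hlt.trans_le (countBelow_le_card D t)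
    have hC := hD.trans_eq hcard.symm
    have hDt := (orderIsoOfFin_lt_iff_lt_countBelow D ⟨_, hD⟩ t).mpr hlt
    have hCt := (Fin.le_def.mp (h _ hC hD)).trans_lt hDt
    exact lt_irrefl _ ((orderIsoOfFin_lt_iff_lt_countBelow C ⟨_, hC⟩ t).mp hCt)
  · have hkD := (orderIsoOfFin_lt_iff_lt_countBelow D ⟨k, hD⟩ _).mp (Nat.lt_succ_self _)
    exact Nat.lt_succ_iff.mp
      ((orderIsoOfFin_lt_iff_lt_countBelow C ⟨k, hC⟩ _).mpr (hkD.trans_le (h _)))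

theorem GaleLE.refl (C : Finset (Fin n)) : GaleLE C C := ⟨rfl, fun _ _ _ => le_rfl⟩

theorem GaleLE.trans {C D E : Finset (Fin n)} (hCD : GaleLE C D) (hDE : GaleLE D E) :
    GaleLE C E := by
  rw [galeLE_iff_countBelow_le] at *
  exact ⟨hCD.1.trans hDE.1, fun t => (hDE.2 t).trans (hCD.2 t)⟩

theorem GaleLE.antisymm {C D : Finset (Fin n)} (hCD : GaleLE C D) (hDC : GaleLE D C) :
    C = D := by
  rw [galeLE_iff_countBelow_le] at hCD hDC
  have hcount t : countBelow C t = countBelow D t := (hDC.2 t).antisymm (hCD.2 t)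
  ext x
  have hx := hcount (x + 1)
  rw [countBelow_succ, countBelow_succ, hcount x, Nat.add_left_cancel_iff] at hx
  split_ifs at hx <;> simp_all

open scoped Classical in
/-- The columns `C` with `C ≤ E` in the Gale order. -/
noncomputable def galeIic (E : Finset (Fin n)) : Finset (Finset (Fin n)) := {C | GaleLE C E}

theorem mem_galeIic {C E : Finset (Fin n)} : C ∈ galeIic E ↔ GaleLE C E := by
  simp [galeIic]

theorem self_mem_galeIic (E : Finset (Fin n)) : E ∈ galeIic E :=
  mem_galeIic.mpr (GaleLE.refl E)

theorem galeIic_subset_galeIic {E F : Finset (Fin n)} : galeIic E ⊆ galeIic F ↔ GaleLE E F :=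
  ⟨fun h => mem_galeIic.mp (h (self_mem_galeIic E)), fun h _ hC =>
    mem_galeIic.mpr ((mem_galeIic.mp hC).trans h)⟩

theorem galeIic_injective : Function.Injective (galeIic (n := n)) := fun _ _ h =>
  (galeIic_subset_galeIic.mp h.subset).antisymm (galeIic_subset_galeIic.mp h.superset)

end GaleOrder

section RowSwap

open Finset Equiv
open scoped Pointwise

variable {n : ℕ} {i j : Fin n}

theorem mem_swap_smul {C : Finset (Fin n)} {x : Fin n} :
    x ∈ swap i j • C ↔ swap i j x ∈ C := by
  rw [← Finset.inv_smul_mem_iff, swap_inv, Perm.smul_def]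

theorem swap_smul_swap_smul (C : Finset (Fin n)) : swap i j • swap i j • C = C := by
  rw [smul_smul, swap_mul_self, one_smul]

theorem swap_smul_eq_self {C : Finset (Fin n)} (hC : i ∈ C ↔ j ∈ C) : swap i j • C = C := by
  ext x
  rw [mem_swap_smul]
  rcases eq_or_ne x i with rfl | hi
  · rw [swap_apply_left, hC]
  rcases eq_or_ne x j with rfl | hj
  · rw [swap_apply_right, hC]
  · rw [swap_apply_of_ne_of_ne hi hj]

theorem prod_swap_smul {A : Type*} [CommMonoid A] (g : Fin n → A) (C : Finset (Fin n)) :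
    ∏ x ∈ swap i j • C, g x = ∏ x ∈ C, (g ∘ swap i j) x := by
  rw [smul_finset_def, prod_image (MulAction.injective (swap i j)).injOn]
  rfl

theorem countBelow_swap_smul (hij : (i : ℕ) + 1 = j) (C : Finset (Fin n)) {t : ℕ}
    (ht : t ≠ j) : countBelow (swap i j • C) t = countBelow C t := by
  have hlt (x : Fin n) : (swap i j x : ℕ) < t ↔ (x : ℕ) < t := by
    rw [swap_apply_def]
    split_ifs <;> grind
  have hfilter : ({x ∈ swap i j • C | x.val < t} : Finset (Fin n)) =
      swap i j • ({x ∈ C | x.val < t} : Finset (Fin n)) := by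
    ext x
    simp only [mem_filter, mem_swap_smul, hlt]
  rw [countBelow, hfilter, card_smul_finset, countBelow]

theorem countBelow_swap_smul_right (hij : (i : ℕ) + 1 = j) (C : Finset (Fin n)) :
    countBelow (swap i j • C) j = countBelow C i + if j ∈ C then 1 else 0 := by
  rw [← hij, countBelow_succ, countBelow_swap_smul hij C (by lia)]
  simp only [mem_swap_smul, swap_apply_left]

theorem countBelow_right (hij : (i : ℕ) + 1 = j) (C : Finset (Fin n)) :
    countBelow C j = countBelow C i + if i ∈ C then 1 else 0 := by
  rw [← hij, countBelow_succ]

theorem GaleLE.swap_smul_left (hij : (i : ℕ) + 1 = j) {C E : Finset (Fin n)}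
    (hE : i ∈ E → j ∈ E) (h : GaleLE C E) : GaleLE (swap i j • C) E := by
  rw [galeLE_iff_countBelow_le] at h ⊢
  refine ⟨(card_smul_finset _ _).trans h.1, fun t => ?_⟩
  rcases eq_or_ne t j with rfl | ht
  · have hi := h.2 i
    have hj := h.2 j
    have hj' := h.2 (j + 1)
    simp only [countBelow_swap_smul_right hij, countBelow_succ, countBelow_right hij] at hj hj' ⊢
    split_ifs at * <;> lia
  · exact (h.2 t).trans_eq (countBelow_swap_smul hij C ht).symm

theorem GaleLE.swap_smul_right (hij : (i : ℕ) + 1 = j) {C E : Finset (Fin n)}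
    (hE : j ∈ E → i ∈ E) (h : GaleLE C E) : GaleLE C (swap i j • E) := by
  rw [galeLE_iff_countBelow_le] at h ⊢
  refine ⟨h.1.trans (card_smul_finset _ _).symm, fun t => ?_⟩
  rcases eq_or_ne t j with rfl | ht
  · refine le_trans ?_ (h.2 j)
    rw [countBelow_swap_smul_right hij, countBelow_right hij]
    split_ifs <;> lia
  · exact (countBelow_swap_smul hij E ht).trans_le (h.2 t)

theorem GaleLE.notMem_and_mem_of_swap_smul_right (hij : (i : ℕ) + 1 = j) {C E : Finset (Fin n)}
    (h : GaleLE C (swap i j • E)) (hCE : ¬ GaleLE C E) : i ∉ C ∧ j ∈ C := by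
  rw [galeLE_iff_countBelow_le] at h hCE
  have hcount {t : ℕ} (ht : t ≠ j) : countBelow E t ≤ countBelow C t :=
    (countBelow_swap_smul hij E ht).symm.trans_le (h.2 t)
  have hj : countBelow C j < countBelow E j := by
    by_contra! hle
    refine hCE ⟨h.1.trans (card_smul_finset _ _), fun t => ?_⟩
    rcases eq_or_ne t j with rfl | ht
    exacts [hle, hcount ht]
  have hi := hcount (t := i) (by lia)
  have hj' := hcount (t := j + 1) (by lia)
  simp only [countBelow_succ, countBelow_right hij] at hj hj'
  split_ifs at * <;> lia

end RowSwap

section GaleSum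

open Finset Equiv
open scoped Pointwise

variable {n : ℕ} {A : Type*}

/-- The sum of `∏ x ∈ C, g x` over the columns `C ≤ E`. For `g = X` it is the factor contributed
to `MaxPoly` by the column `E`; other values of `g` are specialisations of that factor. -/
noncomputable def galeSum [CommSemiring A] (g : Fin n → A) (E : Finset (Fin n)) : A :=
  ∑ C ∈ galeIic E, ∏ x ∈ C, g x

theorem maxPoly_eq_prod_galeSum (D : Fin n → Finset (Fin n)) :
    MaxPoly D = ∏ c, galeSum X (D c) := by
  classical
  simp only [MaxPoly, xDiagram, galeSum, prod_univ_sum]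
  refine sum_congr ?_ fun _ _ => rfl
  ext C
  rw [mem_filter_univ, Fintype.mem_piFinset]
  simp only [mem_galeIic, DiagramLE]

theorem map_galeSum {B F : Type*} [CommSemiring A] [CommSemiring B] [FunLike F A B]
    [RingHomClass F A B] (f : F) (g : Fin n → A) (E : Finset (Fin n)) :
    f (galeSum g E) = galeSum (f ∘ g) E := by
  simp only [galeSum, map_sum, map_prod, Function.comp_apply]

theorem aeval_galeSum_X {R : Type*} [CommSemiring R] [CommSemiring A] [Algebra R A]
    (g : Fin n → A) (E : Finset (Fin n)) : aeval (R := R) g (galeSum X E) = galeSum g E := by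
  rw [map_galeSum]
  simp only [Function.comp_def, aeval_X]

variable {i j : Fin n}

theorem galeSum_comp_swap [CommSemiring A] (hij : (i : ℕ) + 1 = j) (g : Fin n → A)
    {E : Finset (Fin n)} (hE : i ∈ E → j ∈ E) :
    galeSum (g ∘ swap i j) E = galeSum g E := by
  have hmaps C (hC : C ∈ galeIic E) : swap i j • C ∈ galeIic E :=
    mem_galeIic.mpr ((mem_galeIic.mp hC).swap_smul_left hij hE)
  exact sum_bij' (fun C _ => swap i j • C) (fun C _ => swap i j • C) hmaps hmaps
    (fun C _ => swap_smul_swap_smul C) (fun C _ => swap_smul_swap_smul C)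
    fun C _ => (prod_swap_smul g C).symm

theorem mul_prod_eq_mul_prod_comp_swap [CommMonoid A] (g : Fin n → A) {C : Finset (Fin n)}
    (hi : i ∉ C) (hj : j ∈ C) : g i * ∏ x ∈ C, g x = g j * ∏ x ∈ C, (g ∘ swap i j) x := by
  have hfix : ∏ x ∈ C.erase j, (g ∘ swap i j) x = ∏ x ∈ C.erase j, g x :=
    prod_congr rfl fun x hx => by
      have hxi : x ≠ i := fun h => hi (h ▸ mem_of_mem_erase hx)
      rw [Function.comp_apply, swap_apply_of_ne_of_ne hxi (ne_of_mem_erase hx)]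
  rw [← mul_prod_erase C g hj, ← mul_prod_erase C _ hj, hfix, Function.comp_apply,
    swap_apply_right, mul_left_comm]

/-- The Demazure operator `f ↦ ∂ᵢ (xᵢ f)` moves the column `E` to `swap i j • E`. -/
theorem sub_mul_galeSum_swap_smul [CommRing A] (hij : (i : ℕ) + 1 = j) (g : Fin n → A)
    {E : Finset (Fin n)} (hE : j ∈ E → i ∈ E) :
    (g i - g j) * galeSum g (swap i j • E) =
      g i * galeSum g E - g j * galeSum (g ∘ swap i j) E := by
  set new := galeIic (swap i j • E) \ galeIic E with hnew
  have hsplit (h : Fin n → A) :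
      galeSum h (swap i j • E) = ∑ C ∈ new, ∏ x ∈ C, h x + galeSum h E :=
    (sum_sdiff (galeIic_subset_galeIic.mpr ((GaleLE.refl E).swap_smul_right hij hE))).symm
  have hexchange : g i * ∑ C ∈ new, ∏ x ∈ C, g x =
      g j * ∑ C ∈ new, ∏ x ∈ C, (g ∘ swap i j) x := by
    rw [mul_sum, mul_sum]
    refine sum_congr rfl fun C hC => ?_
    rw [hnew, mem_sdiff, mem_galeIic, mem_galeIic] at hC
    obtain ⟨hi, hj⟩ := hC.1.notMem_and_mem_of_swap_smul_right hij hC.2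
    exact mul_prod_eq_mul_prod_comp_swap g hi hj
  have hsymm : galeSum (g ∘ swap i j) (swap i j • E) = galeSum g (swap i j • E) :=
    galeSum_comp_swap hij g (by simpa only [mem_swap_smul, swap_apply_left, swap_apply_right])
  rw [hsplit, hsplit] at hsymm
  rw [hsplit]
  linear_combination hexchange + g j * hsymm

end GaleSum

section FirstRows

open Finset Equiv
open scoped Pointwise

variable {n : ℕ}

/-- The rows `0, …, k - 1`. -/
def firstRows (n k : ℕ) : Finset (Fin n) := {x | x.val < k}

theorem mem_firstRows {k : ℕ} {x : Fin n} : x ∈ firstRows n k ↔ (x : ℕ) < k := by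
  simp [firstRows]

theorem card_firstRows {k : ℕ} (hk : k ≤ n) : #(firstRows n k) = k := by
  rw [firstRows, Fin.card_filter_val_lt, min_eq_right hk]

theorem firstRows_succ (k : Fin n) : firstRows n (k + 1) = insert k (firstRows n k) := by
  ext x
  rw [mem_insert, mem_firstRows, mem_firstRows, Fin.ext_iff]
  lia

theorem swap_smul_firstRows {i j : Fin n} (hij : (i : ℕ) + 1 = j) {k : ℕ} (hk : k ≠ j) :
    swap i j • firstRows n k = firstRows n k :=
  swap_smul_eq_self (by rw [mem_firstRows, mem_firstRows]; lia)

theorem map_succAboveEmb_firstRows {k : Fin (n + 1)} {r : ℕ} (hr : r ≤ k) :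
    (firstRows n r).map k.succAboveEmb = firstRows (n + 1) r := by
  ext x
  rw [mem_firstRows]
  have hval (y : Fin n) : (y : ℕ) < r ↔ (k.succAbove y : ℕ) < r := by
    grind [Fin.succAbove]
  constructor
  · intro hx
    obtain ⟨y, hy, rfl⟩ := mem_map.mp hx
    exact (hval y).mp (mem_firstRows.mp hy)
  · intro hx
    obtain ⟨y, rfl⟩ := Fin.exists_succAbove_eq (x := x) (y := k) (by lia)
    exact mem_map_of_mem _ (mem_firstRows.mpr ((hval y).mpr hx))

theorem galeIic_firstRows (k : ℕ) : galeIic (firstRows n k) = {firstRows n k} := by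
  ext C
  rw [mem_galeIic, mem_singleton]
  refine ⟨fun h => ?_, fun h => h ▸ GaleLE.refl C⟩
  have hcount : #C ≤ #{x ∈ C | x.val < k} := by
    refine h.1.trans_le (le_trans ?_ ((galeLE_iff_countBelow_le.mp h).2 k))
    rw [countBelow, filter_true_of_mem fun x hx => mem_firstRows.mp hx]
  have hsubset : C ⊆ firstRows n k := fun x hx =>
    mem_firstRows.mpr (card_filter_eq_iff.mp ((card_filter_le _ _).antisymm hcount) x hx)
  exact eq_of_subset_of_card_le hsubset h.1.ge

theorem galeSum_firstRows {A : Type*} [CommSemiring A] (g : Fin n → A) (k : ℕ) :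
    galeSum g (firstRows n k) = ∏ x ∈ firstRows n k, g x := by
  rw [galeSum, galeIic_firstRows, sum_singleton]

theorem prod_firstRows_succ {A : Type*} [CommMonoid A] (g : Fin n → A) (k : Fin n) :
    ∏ x ∈ firstRows n (k + 1), g x = g k * ∏ x ∈ firstRows n k, g x := by
  rw [firstRows_succ, prod_insert fun h => lt_irrefl _ (mem_firstRows.mp h)]

end FirstRows

section AscentAtMin

open Equiv

variable {n : ℕ}

/-- An ascent of `w` at adjacent positions `i, j` whose left end is a left-to-right minimum. The
first ascent of `w` is one; only the minimality is used. -/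
structure IsAscentAtMin (w : Perm (Fin n)) (i j : Fin n) : Prop where
  val_add_one : (i : ℕ) + 1 = j
  lt : w i < w j
  lt_of_lt {r : Fin n} : r < i → w i < w r

theorem eq_revPerm_of_strictAnti {w : Perm (Fin n)} (hw : StrictAnti w) : w = Fin.revPerm := by
  have hrev : StrictMono (Fin.revPerm ∘ w) := Fin.rev_strictAnti.comp hw
  have hid : Fin.revPerm ∘ w = id :=
    (hrev.range_inj strictMono_id).mp
      ((w.trans Fin.revPerm).surjective.range_eq.trans Set.range_id.symm)
  ext x
  rw [← Fin.revPerm_symm, ← (symm_apply_eq _).mpr (congrFun hid x).symm]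
  rfl

theorem eq_revPerm_or_exists_isAscentAtMin (w : Perm (Fin n)) :
    w = Fin.revPerm ∨ ∃ i j, IsAscentAtMin w i j := by
  refine or_iff_not_imp_right.mpr fun hw => eq_revPerm_of_strictAnti fun r i hri => ?_
  induction i using WellFoundedLT.induction generalizing r with
  | ind i ih =>
    obtain ⟨p, hp⟩ : ∃ p : Fin n, (p : ℕ) + 1 = i := ⟨⟨i - 1, by lia⟩, by grind⟩
    have hpi : w i < w p := by
      refine (le_of_not_gt fun hlt => hw ⟨p, i, hp, hlt, ih p (by lia) _⟩).lt_of_ne ?_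
      exact w.injective.ne (by lia)
    obtain rfl | hrp : r = p ∨ r < p := by lia
    · exact hpi
    · exact hpi.trans (ih p (by lia) r hrp)

theorem IsAscentAtMin.lex_lt {w : Perm (Fin n)} {i j : Fin n} (h : IsAscentAtMin w i j) :
    toLex ⇑w < toLex ⇑(w * swap i j) := by
  have hij : i ≤ j := Fin.le_def.mpr (by have := h.val_add_one; lia)
  have hdesc : (w * swap i j) j < (w * swap i j) i := by simpa using h.lt
  simpa [Function.comp_assoc, ← Perm.coe_mul] using Pi.lex_desc hij hdesc

theorem ascentAtMin_induction {P : Perm (Fin n) → Prop} (rev : P Fin.revPerm)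
    (step : ∀ w i j, IsAscentAtMin w i j → P (w * swap i j) → P w) (w : Perm (Fin n)) : P w := by
  induction w using (InvImage.wf (fun w : Perm (Fin n) => toLex ⇑w)
    (wellFounded_gt (α := Lex (Fin n → Fin n)))).induction with
  | _ w ih =>
    obtain rfl | ⟨i, j, h⟩ := eq_revPerm_or_exists_isAscentAtMin w
    · exact rev
    · exact step w i j h (ih _ h.lex_lt)

end AscentAtMin

section SwapDivisibility

open Finset Equiv
open scoped Pointwise

variable {σ R : Type*} [CommRing R]

theorem X_sub_X_ne_zero [Nontrivial R] {i j : σ} (hij : i ≠ j) :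
    (X i - X j : MvPolynomial σ R) ≠ 0 :=
  sub_ne_zero.mpr ((X_injective (R := R)).ne hij)

theorem X_sub_X_dvd_sub_rename_swap [DecidableEq σ] (i j : σ) (p : MvPolynomial σ R) :
    X i - X j ∣ p - rename (swap i j) p := by
  set I := Ideal.span {(X i - X j : MvPolynomial σ R)}
  have hX : Ideal.Quotient.mk I (X i) = Ideal.Quotient.mk I (X j) :=
    Ideal.Quotient.eq.mpr (Ideal.mem_span_singleton_self _)
  have hmk : (Ideal.Quotient.mkₐ R I).comp (rename (swap i j)) = Ideal.Quotient.mkₐ R I := by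
    refine algHom_ext fun k => ?_
    rw [AlgHom.comp_apply, rename_X, swap_apply_def]
    split_ifs with hi hj <;> simp only [Ideal.Quotient.mkₐ_eq_mk, *]
  exact Ideal.mem_span_singleton.mp (Ideal.Quotient.eq.mp (DFunLike.congr_fun hmk p).symm)

theorem dvd_of_sub_mul_eq_sub_rename_swap [IsDomain R] [DecidableEq σ] {i j : σ} (hij : i ≠ j)
    {d p q : MvPolynomial σ R} (hd : rename (swap i j) d = d) (hdq : d ∣ q)
    (h : (X i - X j) * p = q - rename (swap i j) q) : d ∣ p := by
  obtain ⟨t, rfl⟩ := hdq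
  obtain ⟨u, hu⟩ := X_sub_X_dvd_sub_rename_swap i j t
  refine ⟨u, mul_left_cancel₀ (X_sub_X_ne_zero hij) ?_⟩
  rw [h, map_mul, hd]
  linear_combination d * hu

variable {n : ℕ}

theorem rename_swap_prod_firstRows {i j : Fin n} (hij : (i : ℕ) + 1 = j) {r : ℕ} (hr : r ≠ j) :
    rename (swap i j) (∏ t ∈ firstRows n r, (X t : MvPolynomial (Fin n) R)) =
      ∏ t ∈ firstRows n r, X t := by
  rw [map_prod]
  simp only [rename_X]
  conv_rhs => rw [← swap_smul_firstRows hij hr, prod_swap_smul]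
  rfl

theorem IsSchubertFamily.prod_firstRows_pow_dvd {S : Perm (Fin n) → MvPolynomial (Fin n) ℤ}
    (hS : IsSchubertFamily S) (p : ℕ) (w : Perm (Fin n)) (r : ℕ)
    (hw : ∀ t ∈ firstRows n r, p ≤ w t) : (∏ t ∈ firstRows n r, X t) ^ p ∣ S w := by
  induction w using ascentAtMin_induction generalizing r with
  | rev =>
    rw [hS.1, ← prod_pow]
    refine (prod_dvd_prod_of_dvd _ _ fun t ht => pow_dvd_pow _ ?_).trans
      (prod_dvd_prod_of_subset _ _ _ (subset_univ _))
    have := hw t ht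
    rw [Fin.revPerm_apply, Fin.val_rev] at this
    lia
  | step w i j h ih =>
    have hij := h.val_add_one
    have hdvd {s : ℕ} (hs : s ≠ j) (hws : ∀ t ∈ firstRows n s, p ≤ w t) :
        (∏ t ∈ firstRows n s, X t) ^ p ∣ S w := by
      refine dvd_of_sub_mul_eq_sub_rename_swap (i := i) (j := j) (by lia) ?_ (ih s fun t ht => ?_)
        (hS.2 w i j hij h.lt)
      · rw [map_pow, rename_swap_prod_firstRows hij hs]
      · rw [Perm.mul_apply]
        exact hws _ (mem_swap_smul.mp ((swap_smul_firstRows hij hs).symm ▸ ht))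
    rcases eq_or_ne r j with rfl | hr
    · have hsubset : firstRows n j ⊆ firstRows n (j + 1) := by
        rw [firstRows_succ]
        exact subset_insert _ _
      refine (pow_dvd_pow_of_dvd (prod_dvd_prod_of_subset _ _ X hsubset) p).trans
        (hdvd (by lia) ?_)
      rw [firstRows_succ, forall_mem_insert]
      have hwi := hw i (mem_firstRows.mpr (by lia))
      exact ⟨hwi.trans (Fin.le_def.mp h.lt.le), hw⟩
    · exact hdvd hr hw

end SwapDivisibility

section Avoidance

open Equiv

variable {n : ℕ}

/-- Simultaneous avoidance of 1432 and 1423: for positions `a < b`, at most one later position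
has its value between `w a` and `w b`. -/
def Avoids1432And1423 (w : Perm (Fin n)) : Prop :=
  ∀ ⦃a b⦄, a < b → {e | b < e ∧ w a < w e ∧ w e < w b}.Subsingleton

theorem strictMono_fin_four {α : Type*} [Preorder α] {f : Fin 4 → α} (h01 : f 0 < f 1)
    (h12 : f 1 < f 2) (h23 : f 2 < f 3) : StrictMono f :=
  Fin.strictMono_iff_lt_succ.mpr (by simp [Fin.forall_fin_succ, *])

theorem containsPattern_of_strictMono {m : ℕ} {w : Perm (Fin n)} {π : Fin m → ℕ}
    {p : Fin m → Fin n} (hp : StrictMono p) {σ : Fin m → Fin m} (hσ : Function.Surjective σ)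
    (hπ : StrictMono (π ∘ σ)) (hw : StrictMono (w ∘ p ∘ σ)) : ContainsPattern w π :=
  ⟨OrderEmbedding.ofStrictMono p hp,
    hσ.forall₂.mpr fun _ _ => hπ.lt_iff_lt.trans hw.lt_iff_lt.symm⟩

theorem not_avoids_of_containsPattern {w : Perm (Fin n)} {π : Fin 4 → ℕ}
    (hπ : π 0 < π 2 ∧ π 0 < π 3 ∧ π 2 < π 1 ∧ π 3 < π 1) (hw : ContainsPattern w π) :
    ¬ Avoids1432And1423 w := by
  obtain ⟨f, hf⟩ := hw
  simp only [hf] at hπ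
  obtain ⟨h02, h03, h21, h31⟩ := hπ
  intro h
  have h23 : f 2 = f 3 := h (f.strictMono (show 0 < 1 by decide))
    ⟨f.strictMono (by decide), h02, h21⟩ ⟨f.strictMono (by decide), h03, h31⟩
  exact absurd (f.injective h23) (by decide)

theorem avoids_iff_avoidsPattern {w : Perm (Fin n)} :
    Avoids1432And1423 w ↔ AvoidsPattern w ![1, 4, 3, 2] ∧ AvoidsPattern w ![1, 4, 2, 3] := by
  refine ⟨fun h => ⟨fun hc => not_avoids_of_containsPattern (by decide) hc h,
    fun hc => not_avoids_of_containsPattern (by decide) hc h⟩, fun ⟨h1432, h1423⟩ => ?_⟩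
  intro a b hab c ⟨hbc, hac, hcb⟩ d ⟨hbd, had, hdb⟩
  wlog hcd : c < d generalizing c d
  · exact (le_of_not_gt hcd).eq_or_lt.elim Eq.symm
      fun hdc => (this hbd had hdb hbc hac hcb hdc).symm
  have hmono : StrictMono ![a, b, c, d] := strictMono_fin_four hab hbc hcd
  rcases (w.injective.ne hcd.ne).lt_or_gt with hlt | hgt
  · refine absurd (containsPattern_of_strictMono hmono (σ := ![0, 2, 3, 1]) (by decide) ?_ ?_) h1423
    · exact strictMono_fin_four (by decide) (by decide) (by decide)
    · exact strictMono_fin_four hac hlt hdb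
  · refine absurd (containsPattern_of_strictMono hmono (σ := ![0, 3, 2, 1]) (by decide) ?_ ?_) h1432
    · exact strictMono_fin_four (by decide) (by decide) (by decide)
    · exact strictMono_fin_four had hgt hcb

theorem swap_lt_swap {i j x y : Fin n} (hij : (i : ℕ) + 1 = j) (hxy : x < y)
    (hne : ¬ (x = i ∧ y = j)) : swap i j x < swap i j y := by
  rw [swap_apply_def, swap_apply_def]
  split_ifs <;> lia

theorem Avoids1432And1423.mul_swap {w : Perm (Fin n)} (hw : Avoids1432And1423 w) {i j : Fin n}
    (h : IsAscentAtMin w i j) : Avoids1432And1423 (w * swap i j) := by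
  have hij := h.val_add_one
  intro a b hab c hc d hd
  simp only [Set.mem_ofPred_eq, Perm.mul_apply] at hc hd
  have hab' : swap i j a < swap i j b := by
    refine swap_lt_swap hij hab ?_
    rintro ⟨rfl, rfl⟩
    rw [swap_apply_left, swap_apply_right] at hc
    exact h.lt.not_gt (hc.2.1.trans hc.2.2)
  have hlater {e : Fin n} (hbe : b < e) (hae : w (swap i j a) < w (swap i j e)) :
      swap i j b < swap i j e := by
    refine swap_lt_swap hij hbe ?_
    rintro ⟨rfl, rfl⟩
    rw [swap_apply_right, swap_apply_of_ne_of_ne hab.ne (hab.trans hbe).ne] at hae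
    exact (h.lt_of_lt hab).not_gt hae
  exact (swap i j).injective
    (hw hab' ⟨hlater hc.1 hc.2.1, hc.2⟩ ⟨hlater hd.1 hd.2.1, hd.2⟩)

end Avoidance

section RotheDiagram

open Finset Equiv
open scoped Pointwise

variable {n : ℕ} {w : Perm (Fin n)} {i j c : Fin n}

theorem mem_rothe {x : Fin n} : x ∈ rothe w c ↔ c < w x ∧ x < w.symm c := by
  simp [rothe]

theorem rothe_apply_eq_firstRows {q : Fin n} (hq : ∀ r < q, w q < w r) :
    rothe w (w q) = firstRows n q := by
  ext x
  rw [mem_rothe, symm_apply_apply, mem_firstRows, ← Fin.lt_def]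
  exact ⟨And.right, fun hx => ⟨hq x hx, hx⟩⟩

theorem right_mem_rothe_of_left_mem (hij : (i : ℕ) + 1 = j) (hlt : w i < w j)
    (hi : i ∈ rothe w c) : j ∈ rothe w c := by
  rw [mem_rothe] at hi ⊢
  have hne : j ≠ w.symm c := fun h => (hi.1.trans hlt).ne' (by rw [h, apply_symm_apply])
  exact ⟨hi.1.trans hlt, by lia⟩

theorem rothe_mul_swap (hij : (i : ℕ) + 1 = j) (hlt : w i < w j) (hc : c ≠ w i) :
    rothe (w * swap i j) c = swap i j • rothe w c := by
  ext x
  rw [mem_swap_smul, mem_rothe, mem_rothe, Perm.mul_apply,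
    show (w * swap i j).symm c = swap i j (w.symm c) from rfl]
  refine and_congr_right fun hx => ⟨fun h => ?_, fun h => ?_⟩
  · rw [← swap_apply_self i j (w.symm c)]
    refine swap_lt_swap hij h fun ⟨_, hj⟩ => hc ?_
    rw [← symm_apply_eq, ← swap_apply_self i j (w.symm c), hj, swap_apply_right]
  · rw [← swap_apply_self i j x]
    refine swap_lt_swap hij h fun ⟨hi, hj⟩ => hlt.not_gt ?_
    rwa [hi, (symm_apply_eq w).mp hj] at hx

theorem IsAscentAtMin.rothe_apply_left (h : IsAscentAtMin w i j) :
    rothe w (w i) = firstRows n i :=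
  rothe_apply_eq_firstRows fun _ => h.lt_of_lt

theorem IsAscentAtMin.rothe_mul_swap_apply_left (h : IsAscentAtMin w i j) :
    rothe (w * swap i j) (w i) = firstRows n j := by
  have hij := h.val_add_one
  have hj : (w * swap i j) j = w i := by rw [Perm.mul_apply, swap_apply_right]
  rw [← hj]
  refine rothe_apply_eq_firstRows fun r hr => ?_
  rw [hj, Perm.mul_apply]
  rcases eq_or_ne r i with rfl | hri
  · rw [swap_apply_left]
    exact h.lt
  · rw [swap_apply_of_ne_of_ne hri hr.ne]
    exact h.lt_of_lt (by lia)

theorem rothe_revPerm_rev (q : Fin n) : rothe Fin.revPerm q.rev = firstRows n q :=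
  rothe_apply_eq_firstRows fun _ => Fin.rev_lt_rev.mpr

theorem prod_galeSum_rothe_revPerm :
    ∏ c, galeSum X (rothe Fin.revPerm c) =
      (∏ x : Fin n, X x ^ (n - 1 - (x : ℕ)) : MvPolynomial (Fin n) ℤ) := by
  calc ∏ c, galeSum X (rothe Fin.revPerm c)
    _ = ∏ q : Fin n, ∏ x ∈ firstRows n q, X x := by
      rw [← Equiv.prod_comp Fin.revPerm]
      simp only [Fin.revPerm_apply, rothe_revPerm_rev, galeSum_firstRows]
    _ = ∏ x : Fin n, ∏ _ ∈ Ioi x, X x :=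
      prod_comm' fun _ _ => by simp [mem_firstRows]
    _ = _ := by simp only [prod_const, Fin.card_Ioi]

end RotheDiagram

section Sufficiency

open Finset Equiv
open scoped Pointwise

variable {n : ℕ} {w : Perm (Fin n)} {i j : Fin n}

-- `f ↦ ∂ᵢ (xᵢ f)` is linear over symmetric factors, and all factors but one are symmetric.
theorem sub_mul_prod_of_subsingleton {ι A F : Type*} [CommRing A] [FunLike F A A]
    [RingHomClass F A A] (φ : F) (a b : A) (s : Finset ι) {f f' : ι → A}
    (hφ : ∀ c ∈ s, φ (f c) = f c)
    (hff' : ∀ c ∈ s, (a - b) * f c = a * f' c - b * φ (f' c))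
    (hne : {c | c ∈ s ∧ f' c ≠ f c}.Subsingleton) :
    (a - b) * ∏ c ∈ s, f c = a * ∏ c ∈ s, f' c - b * φ (∏ c ∈ s, f' c) := by
  classical
  by_cases h : ∃ c ∈ s, f' c ≠ f c
  · obtain ⟨c, hc, hcne⟩ := h
    have hrest : ∏ d ∈ s.erase c, f' d = ∏ d ∈ s.erase c, f d := prod_congr rfl fun d hd => by
      by_contra hdne
      exact ne_of_mem_erase hd (hne ⟨mem_of_mem_erase hd, hdne⟩ ⟨hc, hcne⟩)
    have hφrest : φ (∏ d ∈ s.erase c, f d) = ∏ d ∈ s.erase c, f d := by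
      rw [map_prod]
      exact prod_congr rfl fun d hd => hφ d (mem_of_mem_erase hd)
    rw [← mul_prod_erase s f hc, ← mul_prod_erase s f' hc, hrest, map_mul, hφrest]
    linear_combination (∏ d ∈ s.erase c, f d) * hff' c hc
  · push Not at h
    rw [prod_congr rfl h, map_prod, prod_congr rfl hφ]
    ring

theorem rename_galeSum_X {σ R : Type*} [CommSemiring R] (f : Fin n → σ) (E : Finset (Fin n)) :
    rename f (galeSum X E : MvPolynomial (Fin n) R) = galeSum (X ∘ f) E := by
  rw [map_galeSum]
  simp only [Function.comp_def, rename_X]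

theorem rename_swap_galeSum_rothe (hij : (i : ℕ) + 1 = j) (hlt : w i < w j) (c : Fin n) :
    rename (swap i j) (galeSum X (rothe w c) : MvPolynomial (Fin n) ℤ) =
      galeSum X (rothe w c) :=
  (rename_galeSum_X _ _).trans
    (galeSum_comp_swap hij X (right_mem_rothe_of_left_mem hij hlt))

theorem sub_mul_galeSum_rothe (hij : (i : ℕ) + 1 = j) (hlt : w i < w j) {c : Fin n}
    (hc : c ≠ w i) :
    (X i - X j) * galeSum X (rothe w c) =
      X i * galeSum X (rothe (w * swap i j) c) -
        X j * rename (swap i j) (galeSum X (rothe (w * swap i j) c) : MvPolynomial (Fin n) ℤ) := by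
  have hrothe : swap i j • rothe (w * swap i j) c = rothe w c := by
    rw [rothe_mul_swap hij hlt hc, swap_smul_swap_smul]
  have h := sub_mul_galeSum_swap_smul hij (X : Fin n → MvPolynomial (Fin n) ℤ)
    (E := rothe (w * swap i j) c) (by
      rw [rothe_mul_swap hij hlt hc, mem_swap_smul, mem_swap_smul, swap_apply_left,
        swap_apply_right]
      exact right_mem_rothe_of_left_mem hij hlt)
  rw [hrothe] at h
  rw [h, rename_galeSum_X]

theorem Avoids1432And1423.subsingleton_rothe_mul_swap_ne (hw : Avoids1432And1423 w)
    (hij : (i : ℕ) + 1 = j) (hlt : w i < w j) :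
    {c | c ≠ w i ∧ rothe (w * swap i j) c ≠ rothe w c}.Subsingleton := by
  have hbetween {c : Fin n} (hc : c ≠ w i ∧ rothe (w * swap i j) c ≠ rothe w c) :
      w.symm c ∈ {e | j < e ∧ w i < w e ∧ w e < w j} := by
    have hiff : ¬ (i ∈ rothe w c ↔ j ∈ rothe w c) := fun h =>
      hc.2 ((rothe_mul_swap hij hlt hc.1).trans (swap_smul_eq_self h))
    have hj : j ∈ rothe w c := by
      by_contra hj
      exact hiff ⟨right_mem_rothe_of_left_mem hij hlt, fun h => (hj h).elim⟩
    have hi : i ∉ rothe w c := fun hi => hiff (iff_of_true hi hj)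
    rw [mem_rothe] at hi hj
    rw [Set.mem_ofPred_eq, apply_symm_apply]
    exact ⟨hj.2, by grind, hj.1⟩
  exact fun c hc d hd => w.symm.injective (hw (by lia) (hbetween hc) (hbetween hd))

theorem IsSchubertFamily.eq_prod_galeSum_of_avoids {S : Perm (Fin n) → MvPolynomial (Fin n) ℤ}
    (hS : IsSchubertFamily S) (hw : Avoids1432And1423 w) : S w = ∏ c, galeSum X (rothe w c) := by
  induction w using ascentAtMin_induction with
  | rev => rw [hS.1, prod_galeSum_rothe_revPerm]
  | step w i j h ih =>
    have hij := h.val_add_one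
    have hothers := sub_mul_prod_of_subsingleton (rename (R := ℤ) (swap i j)) (X i) (X j)
      (univ.erase (w i)) (f := fun c => galeSum X (rothe w c))
      (f' := fun c => galeSum X (rothe (w * swap i j) c))
      (fun c _ => rename_swap_galeSum_rothe hij h.lt c)
      (fun c hc => sub_mul_galeSum_rothe hij h.lt (ne_of_mem_erase hc))
      ((hw.subsingleton_rothe_mul_swap_ne hij h.lt).anti fun c hc =>
        ⟨ne_of_mem_erase hc.1, fun heq => hc.2 (congrArg (galeSum X) heq)⟩)
    refine mul_left_cancel₀ (X_sub_X_ne_zero (R := ℤ) (i := i) (j := j) (by lia)) ?_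
    rw [hS.2 w i j hij h.lt, ih (hw.mul_swap h), ← mul_prod_erase univ _ (mem_univ (w i)),
      ← mul_prod_erase univ _ (mem_univ (w i)), h.rothe_mul_swap_apply_left, h.rothe_apply_left,
      galeSum_firstRows, galeSum_firstRows, ← hij, prod_firstRows_succ, map_mul, map_mul,
      rename_swap_prod_firstRows hij (by lia), rename_X, swap_apply_left]
    linear_combination (-∏ x ∈ firstRows n i, X x) * hothers

end Sufficiency

section InsertMin

open Finset Equiv

variable {n : ℕ} (k : Fin (n + 1)) (v : Perm (Fin n))

/-- The permutation obtained from `v` by inserting a new least value at position `k`. -/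
def insertMin : Perm (Fin (n + 1)) :=
  (finSuccEquiv' k).trans ((optionCongr v).trans (finSuccEquiv' 0).symm)

theorem insertMin_apply_self : insertMin k v k = 0 := by
  simp [insertMin]

theorem insertMin_apply_succAbove (x : Fin n) : insertMin k v (k.succAbove x) = (v x).succ := by
  simp [insertMin]

theorem insertMin_symm_apply_succ (c : Fin n) :
    (insertMin k v).symm c.succ = k.succAbove (v.symm c) := by
  rw [symm_apply_eq, insertMin_apply_succAbove, apply_symm_apply]

variable {k v} in
theorem eq_insertMin_iff {w : Perm (Fin (n + 1))} :
    w = insertMin k v ↔ w k = 0 ∧ ∀ x, w (k.succAbove x) = (v x).succ := by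
  rw [Equiv.ext_iff, Fin.forall_iff_succAbove k, insertMin_apply_self]
  simp only [insertMin_apply_succAbove]

theorem exists_eq_insertMin (w : Perm (Fin (n + 1))) : ∃ k v, w = insertMin k v := by
  obtain ⟨k, hk⟩ : ∃ k, w k = 0 := w.surjective 0
  have hne (x : Fin n) : w (k.succAbove x) ≠ 0 := fun h =>
    Fin.succAbove_ne k x (w.injective (h.trans hk.symm))
  have hinj : Function.Injective fun x => (w (k.succAbove x)).pred (hne x) := fun x y hxy =>
    Fin.succAbove_right_injective (w.injective (Fin.pred_inj.mp hxy))
  refine ⟨k, ofBijective _ (Finite.injective_iff_bijective.mp hinj), eq_insertMin_iff.mpr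
    ⟨hk, fun x => ?_⟩⟩
  rw [ofBijective_apply, Fin.succ_pred]

theorem one_le_insertMin_apply {t : Fin (n + 1)} (ht : t ≠ k) : 1 ≤ (insertMin k v t : ℕ) := by
  obtain ⟨x, rfl⟩ := Fin.exists_succAbove_eq ht
  simp [insertMin_apply_succAbove]

theorem swap_castSucc_succ_succAbove (k x : Fin n) :
    swap k.castSucc k.succ (k.succ.succAbove x) = k.castSucc.succAbove x := by
  rcases eq_or_ne x k with rfl | hxk
  · rw [Fin.succAbove_succ_self, swap_apply_left, Fin.succAbove_castSucc_self]
  · have hsucc : k.succ.succAbove x = k.castSucc.succAbove x := by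
      have := Fin.val_ne_of_ne hxk
      grind [Fin.succAbove]
    rw [hsucc, swap_apply_of_ne_of_ne (Fin.succAbove_ne _ _)]
    exact hsucc ▸ Fin.succAbove_ne _ _

theorem insertMin_castSucc_mul_swap (k : Fin n) :
    insertMin k.castSucc v * swap k.castSucc k.succ = insertMin k.succ v := by
  simp only [eq_insertMin_iff, Perm.mul_apply, swap_apply_right, insertMin_apply_self,
    swap_castSucc_succ_succAbove, insertMin_apply_succAbove, implies_true, and_self]

theorem insertMin_castSucc_lt (k : Fin n) :
    insertMin k.castSucc v k.castSucc < insertMin k.castSucc v k.succ := by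
  rw [insertMin_apply_self, ← Fin.succAbove_castSucc_self, insertMin_apply_succAbove]
  exact Fin.succ_pos _

theorem insertMin_zero_mul_swap (i j : Fin n) :
    insertMin 0 v * swap i.succ j.succ = insertMin 0 (v * swap i j) := by
  refine eq_insertMin_iff.mpr ⟨?_, fun x => ?_⟩
  · rw [Perm.mul_apply, swap_apply_of_ne_of_ne (Fin.succ_ne_zero i).symm (Fin.succ_ne_zero j).symm,
      insertMin_apply_self]
  · rw [Perm.mul_apply, Fin.succAbove_zero, (Fin.succ_injective n).swap_apply, Perm.mul_apply]
    exact insertMin_apply_succAbove 0 v _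

theorem insertMin_last_revPerm : insertMin (Fin.last n) Fin.revPerm = Fin.revPerm := by
  refine (eq_insertMin_iff.mpr ⟨?_, fun x => ?_⟩).symm
  · simp
  · simp [Fin.rev_castSucc]

theorem rothe_insertMin_zero : rothe (insertMin k v) 0 = firstRows (n + 1) k := by
  rw [← insertMin_apply_self k v]
  refine rothe_apply_eq_firstRows fun r hr => ?_
  rw [insertMin_apply_self, Fin.lt_def]
  exact one_le_insertMin_apply k v hr.ne

theorem rothe_insertMin_succ (c : Fin n) :
    rothe (insertMin k v) c.succ = (rothe v c).map k.succAboveEmb := by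
  ext x
  revert x
  rw [Fin.forall_iff_succAbove k]
  simp only [mem_rothe, insertMin_apply_self, insertMin_symm_apply_succ, mem_map,
    insertMin_apply_succAbove, Fin.succAboveEmb_apply, Fin.succAbove_right_inj,
    Fin.succAbove_ne, exists_eq_right, Fin.succ_lt_succ_iff, Fin.succAbove_lt_succAbove_iff,
    Fin.not_lt_zero, false_and, and_false, exists_false, implies_true, and_self]

theorem avoids_insertMin_iff :
    Avoids1432And1423 (insertMin k v) ↔ Avoids1432And1423 v ∧
      ∀ b : Fin n, k ≤ b.castSucc → {e | b < e ∧ v e < v b}.Subsingleton := by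
  have hlt (x y : Fin n) :
      insertMin k v (k.succAbove x) < insertMin k v (k.succAbove y) ↔ v x < v y := by
    rw [insertMin_apply_succAbove, insertMin_apply_succAbove, Fin.succ_lt_succ_iff]
  have hpos (x : Fin n) : insertMin k v k < insertMin k v (k.succAbove x) := by
    rw [insertMin_apply_self, insertMin_apply_succAbove]
    exact Fin.succ_pos _
  have hsucc {x y : Fin (n + 1)} (h : insertMin k v x < insertMin k v y) :
      ∃ y', k.succAbove y' = y := by
    refine Fin.exists_succAbove_eq fun hy => ?_
    rw [hy, insertMin_apply_self] at h
    exact Fin.not_lt_zero _ h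
  refine ⟨fun h => ⟨fun a b hab c hc d hd => ?_, fun b hb c hc d hd => ?_⟩, ?_⟩
  · exact Fin.succAbove_right_injective (h (Fin.succAbove_lt_succAbove_iff.mpr hab)
      ⟨Fin.succAbove_lt_succAbove_iff.mpr hc.1, (hlt _ _).mpr hc.2.1, (hlt _ _).mpr hc.2.2⟩
      ⟨Fin.succAbove_lt_succAbove_iff.mpr hd.1, (hlt _ _).mpr hd.2.1, (hlt _ _).mpr hd.2.2⟩)
  · exact Fin.succAbove_right_injective (h ((Fin.lt_succAbove_iff_le_castSucc _ _).mpr hb)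
      ⟨Fin.succAbove_lt_succAbove_iff.mpr hc.1, hpos _, (hlt _ _).mpr hc.2⟩
      ⟨Fin.succAbove_lt_succAbove_iff.mpr hd.1, hpos _, (hlt _ _).mpr hd.2⟩)
  · rintro ⟨hv, hk⟩ a b hab c ⟨hbc, hac, hcb⟩ d ⟨hbd, had, hdb⟩
    obtain ⟨b, rfl⟩ := hsucc hcb
    obtain ⟨c, rfl⟩ := hsucc hac
    obtain ⟨d, rfl⟩ := hsucc had
    rw [Fin.succAbove_lt_succAbove_iff] at hbc hbd
    rw [hlt] at hcb hdb
    refine congrArg k.succAbove ?_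
    rcases Fin.eq_self_or_eq_succAbove k a with rfl | ⟨a, rfl⟩
    · exact hk b ((Fin.lt_succAbove_iff_le_castSucc _ _).mp hab) ⟨hbc, hcb⟩ ⟨hbd, hdb⟩
    · rw [hlt] at hac had
      exact hv (Fin.succAbove_lt_succAbove_iff.mp hab) ⟨hbc, hac, hcb⟩ ⟨hbd, had, hdb⟩

end InsertMin

section Evaluation

open Finset Equiv

variable {n : ℕ}

theorem insertNth_comp_swap {A : Type*} (k : Fin n) (a : A) (g : Fin n → A) :
    (k.castSucc.insertNth a g : Fin (n + 1) → A) ∘ swap k.castSucc k.succ =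
      k.succ.insertNth a g := by
  funext x
  revert x
  rw [Fin.forall_iff_succAbove k.succ]
  simp only [Function.comp_apply, swap_apply_right, swap_castSucc_succ_succAbove,
    Fin.insertNth_apply_same, Fin.insertNth_apply_succAbove, implies_true, and_self]

variable {A : Type*} [CommRing A] [Algebra ℤ A] {a : A} {v : Perm (Fin n)}
  {S : Perm (Fin (n + 1)) → MvPolynomial (Fin (n + 1)) ℤ}

theorem IsSchubertFamily.aeval_insertMin_succ_eq_zero (hS : IsSchubertFamily S) {p : ℕ}
    (ha : a ^ p = 0) (g : Fin n → A) {k : Fin n} (hp : ∀ x ≤ k, p ≤ v x + 1) :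
    aeval (k.castSucc.insertNth a g : Fin (n + 1) → A) (S (insertMin k.succ v)) = 0 := by
  have hdvd : (X k.castSucc : MvPolynomial (Fin (n + 1)) ℤ) ^ p ∣ S (insertMin k.succ v) := by
    refine (pow_dvd_pow_of_dvd (dvd_prod_of_mem X (mem_firstRows.mpr ?_)) p).trans
      (hS.prod_firstRows_pow_dvd p _ (k + 1) fun t ht => ?_)
    · exact Nat.lt_succ_self _
    · rw [mem_firstRows] at ht
      obtain ⟨x, rfl⟩ := Fin.exists_succAbove_eq (x := t) (y := k.succ) (by grind)
      rw [insertMin_apply_succAbove]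
      exact hp x (by grind [Fin.succAbove])
  have hzero := map_dvd (aeval (k.castSucc.insertNth a g : Fin (n + 1) → A)) hdvd
  rwa [map_pow, aeval_X, Fin.insertNth_apply_same, ha, zero_dvd_iff] at hzero

theorem IsSchubertFamily.sub_mul_aeval_insertMin (hS : IsSchubertFamily S) {p : ℕ}
    (ha : a ^ p = 0) (g : Fin n → A) {k : Fin n} (hp : ∀ x ≤ k, p ≤ v x + 1) :
    (g k - a) * aeval (k.castSucc.insertNth a g : Fin (n + 1) → A) (S (insertMin k.castSucc v)) =
      aeval (k.succ.insertNth a g : Fin (n + 1) → A) (S (insertMin k.succ v)) := by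
  have hrec := congrArg (aeval (k.castSucc.insertNth a g : Fin (n + 1) → A))
    (hS.2 _ k.castSucc k.succ rfl (insertMin_castSucc_lt v k))
  rw [insertMin_castSucc_mul_swap, map_mul, map_sub, map_sub, aeval_X, aeval_X,
    Fin.insertNth_apply_same, ← Fin.succAbove_castSucc_self, Fin.insertNth_apply_succAbove,
    Fin.succAbove_castSucc_self, aeval_rename, insertNth_comp_swap,
    hS.aeval_insertMin_succ_eq_zero ha g hp] at hrec
  linear_combination -hrec

theorem IsSchubertFamily.prod_mul_aeval_insertMin_zero (hS : IsSchubertFamily S) {p : ℕ}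
    (ha : a ^ p = 0) (g : Fin n → A) (k : Fin (n + 1))
    (hp : ∀ x : Fin n, x.castSucc < k → p ≤ v x + 1) :
    (∏ x ∈ firstRows n k, (g x - a)) *
        aeval (Fin.insertNth 0 a g : Fin (n + 1) → A) (S (insertMin 0 v)) =
      aeval (k.insertNth a g : Fin (n + 1) → A) (S (insertMin k v)) := by
  induction k using Fin.induction with
  | zero => simp [firstRows]
  | succ k ih =>
    rw [← hS.sub_mul_aeval_insertMin ha g fun x hx => hp x (Fin.castSucc_lt_succ_iff.mpr hx),
      ← ih fun x hx => hp x (hx.trans Fin.castSucc_lt_succ), Fin.val_succ,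
      prod_firstRows_succ, Fin.val_castSucc, mul_assoc]

end Evaluation

section RowEmbedding

open Finset Equiv

variable {n : ℕ}

theorem orderIsoOfFin_map {m : ℕ} (f : Fin n ↪o Fin m) (C : Finset (Fin n)) {k : ℕ}
    (hk : k < #C) (hk' : k < #(C.map f.toEmbedding)) :
    ((C.map f.toEmbedding).orderIsoOfFin rfl ⟨k, hk'⟩ : Fin m) =
      f (C.orderIsoOfFin rfl ⟨k, hk⟩) := by
  have hcard : #C = #(C.map f.toEmbedding) := (card_map _).symm
  have hunique := orderEmbOfFin_unique (s := C.map f.toEmbedding) rfl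
    (f := fun x => f (C.orderEmbOfFin hcard x))
    (fun x => mem_map_of_mem _ (orderEmbOfFin_mem C hcard x))
    (f.strictMono.comp (C.orderEmbOfFin hcard).strictMono)
  have hindex : C.orderEmbOfFin hcard ⟨k, hk'⟩ = C.orderEmbOfFin rfl ⟨k, hk⟩ :=
    orderEmbOfFin_eq_orderEmbOfFin_iff.mpr rfl
  exact (congrFun hunique ⟨k, hk'⟩).symm.trans (congrArg f hindex)

theorem galeLE_map_map {m : ℕ} (f : Fin n ↪o Fin m) {C E : Finset (Fin n)} :
    GaleLE (C.map f.toEmbedding) (E.map f.toEmbedding) ↔ GaleLE C E := by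
  constructor <;> refine fun h => ⟨by simpa only [card_map] using h.1, fun k hC hE => ?_⟩
  · have hk := h.2 k (hC.trans_eq (card_map _).symm) (hE.trans_eq (card_map _).symm)
    rwa [orderIsoOfFin_map f C hC, orderIsoOfFin_map f E hE, f.le_iff_le] at hk
  · have hC' := hC.trans_eq (card_map _)
    have hE' := hE.trans_eq (card_map _)
    rw [orderIsoOfFin_map f C hC', orderIsoOfFin_map f E hE', f.le_iff_le]
    exact h.2 k hC' hE'

theorem galeLE_map_of_le {m : ℕ} {f g : Fin n ↪o Fin m} (hfg : ∀ x, f x ≤ g x)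
    (E : Finset (Fin n)) : GaleLE (E.map f.toEmbedding) (E.map g.toEmbedding) := by
  refine ⟨(card_map _).trans (card_map _).symm, fun k hf hg => ?_⟩
  have hk := hf.trans_eq (card_map _)
  rw [orderIsoOfFin_map f E hk, orderIsoOfFin_map g E hk]
  exact hfg _

theorem map_ne_map_of_le_of_lt {m : ℕ} {f g : Fin n ↪o Fin m} (hfg : ∀ x, f x ≤ g x)
    {E : Finset (Fin n)} {b : Fin n} (hb : b ∈ E) (hlt : f b < g b) :
    E.map f.toEmbedding ≠ E.map g.toEmbedding := by
  intro h
  have hsum := congrArg (fun C : Finset (Fin m) => ∑ x ∈ C, (x : ℕ)) h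
  simp only [sum_map] at hsum
  exact (sum_lt_sum (fun x _ => Fin.le_def.mp (hfg x)) ⟨b, hb, hlt⟩).ne hsum

end RowEmbedding

section RowInsertion

open Finset Equiv

variable {n : ℕ}

theorem filter_notMem_galeIic_map (k : Fin (n + 1)) (E : Finset (Fin n)) :
    {C ∈ galeIic (E.map k.succAboveEmb) | k ∉ C} =
      (galeIic E).map (mapEmbedding k.succAboveEmb).toEmbedding := by
  ext C
  rw [mem_filter, mem_galeIic, mem_map]
  constructor
  · rintro ⟨hCE, hk⟩
    have hsubset : C ⊆ univ.map k.succAboveEmb := fun x hx =>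
      let ⟨y, hy⟩ := Fin.exists_succAbove_eq (ne_of_mem_of_not_mem hx hk)
      mem_map.mpr ⟨y, mem_univ y, hy⟩
    obtain ⟨C, -, rfl⟩ := subset_map_iff.mp hsubset
    exact ⟨C, mem_galeIic.mpr ((galeLE_map_map k.succAboveOrderEmb).mp hCE), rfl⟩
  · rintro ⟨C, hC, rfl⟩
    refine ⟨(galeLE_map_map k.succAboveOrderEmb).mpr (mem_galeIic.mp hC), ?_⟩
    simp

theorem galeSum_insertNth_map {A : Type*} [CommSemiring A] (k : Fin (n + 1)) (a : A)
    (g : Fin n → A) (E : Finset (Fin n)) :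
    galeSum (k.insertNth a g : Fin (n + 1) → A) (E.map k.succAboveEmb) =
      galeSum g E + a * ∑ C ∈ galeIic (E.map k.succAboveEmb) with k ∈ C,
        ∏ x ∈ C.erase k, (k.insertNth a g : Fin (n + 1) → A) x := by
  have hmem : ∑ C ∈ galeIic (E.map k.succAboveEmb) with k ∈ C,
      ∏ x ∈ C, (k.insertNth a g : Fin (n + 1) → A) x =
        a * ∑ C ∈ galeIic (E.map k.succAboveEmb) with k ∈ C,
          ∏ x ∈ C.erase k, (k.insertNth a g : Fin (n + 1) → A) x := by
    rw [mul_sum]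
    refine sum_congr rfl fun C hC => ?_
    rw [← mul_prod_erase C _ (mem_filter.mp hC).2, Fin.insertNth_apply_same]
  have hnotMem : ∑ C ∈ galeIic (E.map k.succAboveEmb) with k ∉ C,
      ∏ x ∈ C, (k.insertNth a g : Fin (n + 1) → A) x = galeSum g E := by
    rw [filter_notMem_galeIic_map, sum_map]
    refine sum_congr rfl fun C _ => ?_
    simp
  rw [galeSum, ← sum_filter_add_sum_filter_not _ (k ∈ ·), hmem, hnotMem, add_comm]

theorem aeval_insertNth_prod_galeSum_rothe_insertMin {R A : Type*} [CommSemiring R]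
    [CommSemiring A] [Algebra R A] (k : Fin (n + 1)) (v : Perm (Fin n)) (a : A) (g : Fin n → A) :
    aeval (R := R) (k.insertNth a g : Fin (n + 1) → A)
        (∏ c, galeSum X (rothe (insertMin k v) c)) =
      (∏ x ∈ firstRows n k, g x) *
        ∏ c, galeSum (k.insertNth a g : Fin (n + 1) → A) ((rothe v c).map k.succAboveEmb) := by
  rw [map_prod]
  simp only [aeval_galeSum_X]
  rw [Fin.prod_univ_succ, rothe_insertMin_zero, galeSum_firstRows,
    ← map_succAboveEmb_firstRows le_rfl, prod_map]
  simp only [Fin.succAboveEmb_apply, Fin.insertNth_apply_succAbove, rothe_insertMin_succ]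

end RowInsertion

section Restriction

open Finset Equiv

variable {n : ℕ}

/-- The family on `n` rows obtained from `S` by putting the value `0` into the first position
and setting the first variable to `0`. -/
noncomputable def restrictFamily (S : Perm (Fin (n + 1)) → MvPolynomial (Fin (n + 1)) ℤ)
    (v : Perm (Fin n)) : MvPolynomial (Fin n) ℤ :=
  aeval (Fin.insertNth 0 0 X : Fin (n + 1) → MvPolynomial (Fin n) ℤ) (S (insertMin 0 v))

variable {S : Perm (Fin (n + 1)) → MvPolynomial (Fin (n + 1)) ℤ}

theorem IsSchubertFamily.prod_mul_restrictFamily (hS : IsSchubertFamily S) (k : Fin (n + 1))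
    (v : Perm (Fin n)) :
    (∏ x ∈ firstRows n k, X x) * restrictFamily S v =
      aeval (k.insertNth 0 X : Fin (n + 1) → MvPolynomial (Fin n) ℤ) (S (insertMin k v)) := by
  simpa only [restrictFamily, sub_zero] using hS.prod_mul_aeval_insertMin_zero
    (pow_one (0 : MvPolynomial (Fin n) ℤ)) X k fun _ _ => Nat.le_add_left _ _

theorem prod_firstRows_X_ne_zero (k : ℕ) :
    ∏ x ∈ firstRows n k, (X x : MvPolynomial (Fin n) ℤ) ≠ 0 :=
  prod_ne_zero_iff.mpr fun x _ => X_ne_zero x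

theorem IsSchubertFamily.restrictFamily_revPerm (hS : IsSchubertFamily S) :
    restrictFamily S Fin.revPerm = ∏ x : Fin n, X x ^ (n - 1 - (x : ℕ)) := by
  refine mul_left_cancel₀ (prod_firstRows_X_ne_zero (Fin.last n)) ?_
  have hfirstRows : firstRows n (Fin.last n) = univ := by
    ext x
    simp [mem_firstRows]
  rw [hS.prod_mul_restrictFamily, insertMin_last_revPerm, hS.1, hfirstRows, map_prod,
    Fin.prod_univ_castSucc, ← prod_mul_distrib]
  simp only [map_pow, aeval_X, Fin.insertNth_last', Fin.snoc_last, Fin.snoc_castSucc]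
  rw [Nat.add_sub_cancel, Fin.val_last, Nat.sub_self, pow_zero, mul_one]
  refine prod_congr rfl fun x _ => ?_
  rw [← pow_succ', Fin.val_castSucc]
  congr 1
  lia

theorem IsSchubertFamily.restrict (hS : IsSchubertFamily S) :
    IsSchubertFamily (restrictFamily S) := by
  refine ⟨hS.restrictFamily_revPerm, fun v i j hij hlt => ?_⟩
  have hrec := congrArg (aeval (Fin.insertNth 0 0 X : Fin (n + 1) → MvPolynomial (Fin n) ℤ))
    (hS.2 (insertMin 0 v) i.succ j.succ (by simpa using hij) (by
      rw [← Fin.succAbove_zero, insertMin_apply_succAbove, insertMin_apply_succAbove]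
      exact Fin.succ_lt_succ_iff.mpr hlt))
  have hswap : (Fin.insertNth 0 0 X : Fin (n + 1) → MvPolynomial (Fin n) ℤ) ∘
      swap i.succ j.succ = rename (swap i j) ∘ (Fin.insertNth 0 0 X : Fin (n + 1) → _) := by
    funext x
    refine Fin.cases ?_ (fun x => ?_) x
    · simp [swap_apply_of_ne_of_ne (Fin.succ_ne_zero i).symm (Fin.succ_ne_zero j).symm]
    · simp [(Fin.succ_injective n).swap_apply]
  rw [insertMin_zero_mul_swap, map_mul, map_sub, map_sub, aeval_rename, hswap, aeval_X,
    aeval_X, Fin.insertNth_zero', Fin.cons_succ, Fin.cons_succ] at hrec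
  simp only [restrictFamily, comp_aeval_apply, Fin.insertNth_zero']
  exact hrec

theorem IsSchubertFamily.restrictFamily_eq_prod_galeSum (hS : IsSchubertFamily S)
    {k : Fin (n + 1)} {v : Perm (Fin n)}
    (h : S (insertMin k v) = ∏ c, galeSum X (rothe (insertMin k v) c)) :
    restrictFamily S v = ∏ c, galeSum X (rothe v c) := by
  refine mul_left_cancel₀ (prod_firstRows_X_ne_zero k) ?_
  rw [hS.prod_mul_restrictFamily, h, aeval_insertNth_prod_galeSum_rothe_insertMin]
  simp only [galeSum_insertNth_map, zero_mul, add_zero]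

end Restriction

section RowCounting

open Finset Equiv

variable {n : ℕ}

theorem galeSum_insertNth_one_map {A : Type*} [CommRing A] (k : Fin (n + 1)) (a : A)
    (E : Finset (Fin n)) :
    galeSum (k.insertNth a 1 : Fin (n + 1) → A) (E.map k.succAboveEmb) =
      #(galeIic E) + a * (#(galeIic (E.map k.succAboveEmb)) - #(galeIic E)) := by
  have hsplit : #(galeIic E) + #{C ∈ galeIic (E.map k.succAboveEmb) | k ∈ C} =
      #(galeIic (E.map k.succAboveEmb)) := by
    rw [← card_map (mapEmbedding k.succAboveEmb).toEmbedding, ← filter_notMem_galeIic_map,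
      add_comm, card_filter_add_card_filter_not]
  rw [galeSum_insertNth_map, ← hsplit]
  simp [galeSum]

variable {m q : Fin (n + 1)}

theorem succAboveOrderEmb_apply_le (hmq : m ≤ q) (x : Fin n) :
    q.succAboveOrderEmb x ≤ m.succAboveOrderEmb x := by
  grind [Fin.succAboveOrderEmb_apply, Fin.succAbove]

theorem galeLE_map_succAboveEmb (hmq : m ≤ q) (E : Finset (Fin n)) :
    GaleLE (E.map q.succAboveEmb) (E.map m.succAboveEmb) :=
  galeLE_map_of_le (succAboveOrderEmb_apply_le hmq) E

theorem map_succAboveEmb_ne {E : Finset (Fin n)} {b : Fin n} (hb : b ∈ E) (hmb : m ≤ b.castSucc)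
    (hbq : b.castSucc < q) : E.map q.succAboveEmb ≠ E.map m.succAboveEmb := by
  refine map_ne_map_of_le_of_lt (succAboveOrderEmb_apply_le (hmb.trans hbq.le)) hb ?_
  rw [Fin.succAboveOrderEmb_apply, Fin.succAboveOrderEmb_apply,
    Fin.succAbove_of_castSucc_lt _ _ hbq, Fin.succAbove_of_le_castSucc _ _ hmb]
  exact Fin.castSucc_lt_succ

theorem card_galeIic_map_succAboveEmb_le (hmq : m ≤ q) (E : Finset (Fin n)) :
    #(galeIic (E.map q.succAboveEmb)) ≤ #(galeIic (E.map m.succAboveEmb)) :=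
  card_le_card (galeIic_subset_galeIic.mpr (galeLE_map_succAboveEmb hmq E))

theorem card_galeIic_map_succAboveEmb_lt {E : Finset (Fin n)} {b : Fin n} (hb : b ∈ E)
    (hmb : m ≤ b.castSucc) (hbq : b.castSucc < q) :
    #(galeIic (E.map q.succAboveEmb)) < #(galeIic (E.map m.succAboveEmb)) :=
  card_lt_card <| (galeIic_subset_galeIic.mpr
    (galeLE_map_succAboveEmb (hmb.trans hbq.le) E)).ssubset_of_ne
      (galeIic_injective.ne (map_succAboveEmb_ne hb hmb hbq))

theorem lt_card_galeIic_map_firstRows {q : Fin n} :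
    q < #(galeIic ((firstRows n q).map m.succAboveEmb)) + m := by
  have hinj : Set.InjOn (fun t : Fin (n + 1) => (firstRows n q).map t.succAboveEmb)
      (Icc m q.castSucc) := by
    intro s hs t ht hst
    wlog hlt : s < t generalizing s t
    · exact (le_of_not_gt hlt).eq_or_lt.elim Eq.symm fun h => (this ht hs hst.symm h).symm
    have hsq := hlt.trans_le (mem_Icc.mp ht).2
    refine absurd hst.symm (map_succAboveEmb_ne (b := s.castPred ?_) (mem_firstRows.mpr ?_) ?_ ?_)
    · exact (hsq.trans (Fin.castSucc_lt_last q)).ne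
    · exact hsq
    · exact le_rfl
    · exact hlt
  have hcard := card_le_card_of_injOn _ (t := galeIic ((firstRows n q).map m.succAboveEmb))
    (fun t ht => mem_galeIic.mpr (galeLE_map_succAboveEmb (mem_Icc.mp ht).1 _)) hinj
  rw [Fin.card_Icc, Fin.val_castSucc] at hcard
  lia

end RowCounting

section Necessity

open Finset Equiv
open scoped DualNumber

theorem prod_add_mul_of_mul_self_eq_zero {ι A : Type*} [DecidableEq ι] [CommRing A] {a : A}
    (ha : a * a = 0) (s : Finset ι) (f g : ι → A) :
    ∏ c ∈ s, (f c + a * g c) =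
      ∏ c ∈ s, f c + a * ∑ c ∈ s, (∏ d ∈ s.erase c, f d) * g c := by
  induction s using Finset.induction_on with
  | empty => simp
  | insert b s hb ih =>
    have herase : ∑ c ∈ s, (∏ d ∈ (insert b s).erase c, f d) * g c =
        f b * ∑ c ∈ s, (∏ d ∈ s.erase c, f d) * g c := by
      rw [mul_sum]
      refine sum_congr rfl fun c hc => ?_
      rw [erase_insert_of_ne (ne_of_mem_of_not_mem hc hb).symm,
        prod_insert fun h => hb (mem_of_mem_erase h), mul_assoc]
    rw [prod_insert hb, ih, prod_insert hb, sum_insert hb, erase_insert hb, herase]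
    linear_combination g b * (∑ c ∈ s, (∏ d ∈ s.erase c, f d) * g c) * ha

theorem one_sub_pow_of_mul_self_eq_zero {A : Type*} [CommRing A] {a : A} (ha : a * a = 0)
    (k : ℕ) : (1 - a) ^ k = 1 - k * a := by
  induction k with
  | zero => simp
  | succ k ih =>
    rw [pow_succ, ih, Nat.cast_succ]
    linear_combination (k : A) * ha

variable {n : ℕ} {v : Perm (Fin n)} {S : Perm (Fin (n + 1)) → MvPolynomial (Fin (n + 1)) ℤ}
  {q b c : Fin n} {m k : Fin (n + 1)}

theorem IsSchubertFamily.one_sub_mul_aeval_insertMin_zero (hS : IsSchubertFamily S)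
    (hq : ∀ x, v q ≤ v x) (hk : k ≤ q.castSucc) :
    (1 - ((k : ℕ) : ℤ[ε]) * ε) *
        aeval (Fin.insertNth 0 ε 1 : Fin (n + 1) → ℤ[ε]) (S (insertMin 0 v)) =
      aeval (k.insertNth ε 1 : Fin (n + 1) → ℤ[ε]) (S (insertMin k v)) := by
  have hε : (ε * ε : ℤ[ε]) = 0 := DualNumber.eps_mul_eps
  have hp (x : Fin n) (hx : x.castSucc < k) : 2 ≤ (v x : ℕ) + 1 := by
    have hne : v q ≠ v x := v.injective.ne (by grind)
    have := hq x
    grind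
  rw [← hS.prod_mul_aeval_insertMin_zero ((pow_two ε).trans hε) 1 k hp]
  simp only [Pi.one_apply, prod_const, card_firstRows k.is_le,
    one_sub_pow_of_mul_self_eq_zero hε]

theorem eq_snd_sub_mul_of_one_sub_mul_eq {A : ℤ[ε]} {k : ℕ} {r s : ℤ}
    (h : (1 - (k : ℤ[ε]) * ε) * A = (r : ℤ[ε]) + ε * (s : ℤ[ε])) : s = A.snd - k * r := by
  have hfst := congrArg TrivSqZeroExt.fst h
  have hsnd := congrArg TrivSqZeroExt.snd h
  simp only [TrivSqZeroExt.fst_mul, TrivSqZeroExt.fst_sub, TrivSqZeroExt.fst_one,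
    TrivSqZeroExt.fst_add, TrivSqZeroExt.fst_natCast, TrivSqZeroExt.fst_intCast,
    DualNumber.fst_eps] at hfst
  simp only [DualNumber.snd_mul, TrivSqZeroExt.fst_sub, TrivSqZeroExt.fst_one,
    TrivSqZeroExt.fst_mul, TrivSqZeroExt.fst_natCast, TrivSqZeroExt.fst_intCast,
    TrivSqZeroExt.snd_sub, TrivSqZeroExt.snd_one, TrivSqZeroExt.snd_add,
    TrivSqZeroExt.snd_natCast, TrivSqZeroExt.snd_intCast, DualNumber.fst_eps,
    DualNumber.snd_eps] at hsnd
  linear_combination -hsnd - k * hfst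

theorem IsSchubertFamily.sum_prod_mul_card_galeIic_sub (hS : IsSchubertFamily S)
    (hq : ∀ x, v q ≤ v x) (hk : k ≤ q.castSucc)
    (h : S (insertMin k v) = ∏ c, galeSum X (rothe (insertMin k v) c)) :
    ∑ c, (∏ d ∈ univ.erase c, #(galeIic (rothe v d)) : ℤ) *
        (#(galeIic ((rothe v c).map k.succAboveEmb)) - #(galeIic (rothe v c))) =
      (aeval (Fin.insertNth 0 ε 1 : Fin (n + 1) → ℤ[ε]) (S (insertMin 0 v))).snd -
        ((k : ℕ) : ℤ) * ∏ c, (#(galeIic (rothe v c)) : ℤ) := by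
  have hε : (ε * ε : ℤ[ε]) = 0 := DualNumber.eps_mul_eps
  have hdual : (1 - ((k : ℕ) : ℤ[ε]) * ε) *
        aeval (Fin.insertNth 0 ε 1 : Fin (n + 1) → ℤ[ε]) (S (insertMin 0 v)) =
      ((∏ c, #(galeIic (rothe v c)) : ℤ) : ℤ[ε]) +
        ε * ((∑ c, (∏ d ∈ univ.erase c, #(galeIic (rothe v d)) : ℤ) *
          (#(galeIic ((rothe v c).map k.succAboveEmb)) - #(galeIic (rothe v c))) : ℤ) : ℤ[ε]) := by
    rw [hS.one_sub_mul_aeval_insertMin_zero hq hk, h, aeval_insertNth_prod_galeSum_rothe_insertMin]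
    simp only [Pi.one_apply, prod_const_one, one_mul, galeSum_insertNth_one_map,
      prod_add_mul_of_mul_self_eq_zero hε]
    push_cast
    rfl
  exact eq_snd_sub_mul_of_one_sub_mul_eq hdual

theorem sub_mul_prod_card_galeIic_lt_sum (hq : ∀ x, v q ≤ v x) (hm : m ≤ q.castSucc)
    (hb : b ∈ rothe v c) (hmb : m ≤ b.castSucc) (hbq : b < q) (hc : c ≠ v q) :
    ((q : ℤ) - m) * ∏ d, (#(galeIic (rothe v d)) : ℤ) <
      ∑ e, (∏ d ∈ univ.erase e, #(galeIic (rothe v d)) : ℤ) *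
        (#(galeIic ((rothe v e).map m.succAboveEmb)) -
          #(galeIic ((rothe v e).map q.castSucc.succAboveEmb))) := by
  have hpos (c : Fin n) : 0 < ∏ d ∈ univ.erase c, (#(galeIic (rothe v d)) : ℤ) :=
    prod_pos fun d _ => Nat.cast_pos.mpr (card_pos.mpr ⟨_, self_mem_galeIic _⟩)
  have hfirst : rothe v (v q) = firstRows n q :=
    rothe_apply_eq_firstRows fun r hr => (hq r).lt_of_ne (v.injective.ne hr.ne')
  have hsingle : ∑ e, (if e = v q then ((q : ℤ) - m) * ∏ d, (#(galeIic (rothe v d)) : ℤ) else 0) =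
      ((q : ℤ) - m) * ∏ d, (#(galeIic (rothe v d)) : ℤ) :=
    (sum_ite_eq' univ (v q) _).trans (if_pos (mem_univ _))
  rw [← hsingle]
  refine sum_lt_sum (fun d _ => ?_) ⟨c, mem_univ c, ?_⟩
  · split_ifs with hd
    · rw [hd, ← mul_prod_erase univ _ (mem_univ (v q)), hfirst,
        map_succAboveEmb_firstRows (Fin.val_castSucc q).ge, galeIic_firstRows, galeIic_firstRows,
        card_singleton, card_singleton, Nat.cast_one, one_mul, mul_comm]
      have hcard : (q : ℤ) < #(galeIic ((firstRows n q).map m.succAboveEmb)) + m :=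
        mod_cast lt_card_galeIic_map_firstRows
      exact mul_le_mul_of_nonneg_left (by linarith) (hpos _).le
    · exact mul_nonneg (hpos d).le
        (sub_nonneg.mpr (Nat.cast_le.mpr (card_galeIic_map_succAboveEmb_le hm _)))
  · rw [if_neg hc]
    exact mul_pos (hpos c)
      (sub_pos.mpr (Nat.cast_lt.mpr (card_galeIic_map_succAboveEmb_lt hb hmb hbq)))

theorem IsSchubertFamily.eq_apply_of_mem_rothe (hS : IsSchubertFamily S) (hq : ∀ x, v q ≤ v x)
    (hm : m ≤ q.castSucc) (h : S (insertMin m v) = ∏ c, galeSum X (rothe (insertMin m v) c))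
    (h' : S (insertMin q.castSucc v) = ∏ c, galeSum X (rothe (insertMin q.castSucc v) c))
    (hb : b ∈ rothe v c) (hmb : m ≤ b.castSucc) (hbq : b < q) : c = v q := by
  by_contra hc
  have hdiff := congrArg₂ (· - ·) (hS.sum_prod_mul_card_galeIic_sub hq hm h)
    (hS.sum_prod_mul_card_galeIic_sub hq le_rfl h')
  simp only [← sum_sub_distrib, ← mul_sub, sub_sub_sub_cancel_right, Fin.val_castSucc] at hdiff
  refine (sub_mul_prod_card_galeIic_lt_sum hq hm hb hmb hbq hc).ne ?_
  linear_combination -hdiff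

theorem Avoids1432And1423.subsingleton_of_le (hv : Avoids1432And1423 v) (hq : ∀ x, v q ≤ v x)
    (hb : q ≤ b) : {e | b < e ∧ v e < v b}.Subsingleton := by
  rcases hb.eq_or_lt with rfl | hqb
  · exact fun e he => ((hq e).not_gt he.2).elim
  · exact (hv hqb).anti fun e he =>
      ⟨he.1, (hq e).lt_of_ne (v.injective.ne (hqb.trans he.1).ne), he.2⟩

theorem IsSchubertFamily.subsingleton_of_eq_prod_galeSum (hS : IsSchubertFamily S)
    (hv : Avoids1432And1423 v)
    (h : S (insertMin m v) = ∏ c, galeSum X (rothe (insertMin m v) c)) (hmb : m ≤ b.castSucc) :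
    {e | b < e ∧ v e < v b}.Subsingleton := by
  have : Nonempty (Fin n) := ⟨b⟩
  obtain ⟨q, hq⟩ := Finite.exists_min v
  rcases le_or_gt q b with hqb | hbq
  · exact hv.subsingleton_of_le hq hqb
  have hins : Avoids1432And1423 (insertMin q.castSucc v) :=
    (avoids_insertMin_iff _ _).mpr ⟨hv, fun _ hb => hv.subsingleton_of_le hq hb⟩
  refine Set.subsingleton_singleton.anti (t := {q}) fun e he => v.injective ?_
  refine hS.eq_apply_of_mem_rothe hq (hmb.trans hbq.le) h (hS.eq_prod_galeSum_of_avoids hins)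
    (mem_rothe.mpr ⟨he.2, ?_⟩) hmb hbq
  rw [symm_apply_apply]
  exact he.1

theorem IsSchubertFamily.avoids_of_eq_prod_galeSum {n : ℕ}
    {S : Perm (Fin n) → MvPolynomial (Fin n) ℤ} (hS : IsSchubertFamily S) {w : Perm (Fin n)}
    (h : S w = ∏ c, galeSum X (rothe w c)) : Avoids1432And1423 w := by
  induction n with
  | zero => exact fun a => a.elim0
  | succ n ih =>
    obtain ⟨k, v, rfl⟩ := exists_eq_insertMin w
    have hv : Avoids1432And1423 v := ih hS.restrict (hS.restrictFamily_eq_prod_galeSum h)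
    exact (avoids_insertMin_iff k v).mpr
      ⟨hv, fun b hb => hS.subsingleton_of_eq_prod_galeSum hv h hb⟩

end Necessity

/-- **Theorem (Fan–Guo).** The Schubert polynomial `S_w` equals the upper bound `Max_w`
if and only if `w` avoids the patterns 1432 and 1423. -/
theorem schubert_eq_max_iff_avoids_1432_1423 (n : ℕ) (hn : 1 ≤ n) (w : Equiv.Perm (Fin n))
    (S : Equiv.Perm (Fin n) → MvPolynomial (Fin n) ℤ) (hS : IsSchubertFamily S) :
    S w = MaxPoly (rothe w) ↔
      (AvoidsPattern w ![1, 4, 3, 2] ∧ AvoidsPattern w ![1, 4, 2, 3]) := by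
  rw [maxPoly_eq_prod_galeSum, ← avoids_iff_avoidsPattern]
  exact ⟨hS.avoids_of_eq_prod_galeSum, hS.eq_prod_galeSum_of_avoids⟩
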